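/- Let s > 2 and α ≥ 2, and let p : [0,∞) → ℝ satisfy Assumption (H_α) with parameters 0 < c₁ < c₂ and c₃ > 0. Then for every T > 0 there exist constants N(p,T) ∈ ℕ and C̃(T,p) > 0 such that for every integer N ≥ N(p,T) and every finitely supported family (c_n)_{|n|≥N} of complex numbers, C̃(T,p) · ∑_{|n|≥N} |c_n|² ≤ ∫₀^T |∑_{|n|≥N} c_n e^{2πi(n·p(t) + |n|^s·t)}|² dt. -/

import Mathlib

open MeasureTheory Set

/-- Assumption `(H_α)` with parameters `0 < c₁ < c₂` and `c₃ > 0`. -/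
def AssumptionH (α c₁ c₂ c₃ : ℝ) (p : ℝ → ℝ) : Prop :=
  ContDiffOn ℝ 1 p (Set.Ici 0) ∧ ContDiffOn ℝ 2 p (Set.Ioi 0) ∧
  (∀ t : ℝ, 0 ≤ t → c₁ * t ^ (α - 1) ≤ |deriv p t| ∧ |deriv p t| ≤ c₂ * t ^ (α - 1)) ∧
  (∀ t : ℝ, 0 < t → c₃ * t ^ (α - 2) ≤ |deriv (deriv p) t|)

/-!
Work on a short interval around a point where `p' ≠ 0`; discarding the rest of the integral only
weakens the bound. Since `s > 2`, at high frequency the dispersion `|n|^s` dominates the drift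
`n p'`, so waves with `|n| ≠ |m|` have well separated instantaneous frequencies, while `n` and `-n`
are separated by the drift `2 n p'`. One integration by parts then bounds the `(n, m)` entry of the
Gram matrix of the waves by a constant times `A⁻¹ (1 + (|n| - |m|)²)⁻¹`, where `A → ∞` with the
cutoff. The off-diagonal row sums are `O(A⁻¹)`, and a Gershgorin-type bound shows that the Gram
matrix is at least half its diagonal, the length of the interval.
-/

open Filter Topology
open scoped ComplexConjugate FourierTransform InnerProductSpace

/-! ### Gershgorin bound for Gram matrices -/

section Gershgorin

variable {𝕜 E ι : Type*} [RCLike 𝕜] [NormedAddCommGroup E] [InnerProductSpace 𝕜 E]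
  [DecidableEq ι]

lemma sum_sum_erase_comm {M : Type*} [AddCommMonoid M] (S : Finset ι) (g : ι → ι → M) :
    ∑ i ∈ S, ∑ j ∈ S.erase i, g i j = ∑ i ∈ S, ∑ j ∈ S.erase i, g j i :=
  Finset.sum_comm' fun i j => by simp only [Finset.mem_erase]; tauto

lemma norm_sum_sq_eq_diag_add_offDiag (S : Finset ι) (x : ι → E) :
    ‖∑ i ∈ S, x i‖ ^ 2 =
      ∑ i ∈ S, ‖x i‖ ^ 2 + ∑ i ∈ S, ∑ j ∈ S.erase i, RCLike.re ⟪x i, x j⟫_𝕜 := by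
  rw [← inner_self_eq_norm_sq (𝕜 := 𝕜), sum_inner, map_sum, ← Finset.sum_add_distrib]
  refine Finset.sum_congr rfl fun i hi => ?_
  rw [inner_sum, map_sum, ← Finset.add_sum_erase S _ hi, inner_self_eq_norm_sq]

lemma neg_mul_norm_inner_le_re_inner_smul (x y : E) (a b : 𝕜) :
    -((‖a‖ ^ 2 + ‖b‖ ^ 2) / 2 * ‖⟪x, y⟫_𝕜‖) ≤ RCLike.re ⟪a • x, b • y⟫_𝕜 := by
  have hnorm : ‖⟪a • x, b • y⟫_𝕜‖ = ‖a‖ * ‖b‖ * ‖⟪x, y⟫_𝕜‖ := by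
    rw [inner_smul_left, inner_smul_right, norm_mul, norm_mul, RCLike.norm_conj, mul_assoc]
  have hamgm : ‖a‖ * ‖b‖ ≤ (‖a‖ ^ 2 + ‖b‖ ^ 2) / 2 := by
    linarith [two_mul_le_add_sq ‖a‖ ‖b‖]
  calc -((‖a‖ ^ 2 + ‖b‖ ^ 2) / 2 * ‖⟪x, y⟫_𝕜‖) ≤ -‖⟪a • x, b • y⟫_𝕜‖ := by rw [hnorm]; gcongr
    _ ≤ RCLike.re ⟪a • x, b • y⟫_𝕜 := (abs_le.1 (RCLike.abs_re_le_norm _)).1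

lemma sub_mul_sum_sq_le_norm_sum_smul_sq {S : Finset ι} {v : ι → E} {D R : ℝ} (c : ι → 𝕜)
    (hdiag : ∀ i ∈ S, D ≤ ‖v i‖ ^ 2)
    (hoff : ∀ i ∈ S, ∑ j ∈ S.erase i, ‖⟪v i, v j⟫_𝕜‖ ≤ R) :
    (D - R) * ∑ i ∈ S, ‖c i‖ ^ 2 ≤ ‖∑ i ∈ S, c i • v i‖ ^ 2 := by
  have hdiagSum : D * ∑ i ∈ S, ‖c i‖ ^ 2 ≤ ∑ i ∈ S, ‖c i • v i‖ ^ 2 := by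
    rw [Finset.mul_sum]
    refine Finset.sum_le_sum fun i hi => ?_
    rw [norm_smul, mul_pow, mul_comm]
    exact mul_le_mul_of_nonneg_left (hdiag i hi) (sq_nonneg _)
  have hrows : ∑ i ∈ S, ∑ j ∈ S.erase i, ‖c i‖ ^ 2 * ‖⟪v i, v j⟫_𝕜‖ ≤ R * ∑ i ∈ S, ‖c i‖ ^ 2 := by
    rw [Finset.mul_sum]
    refine Finset.sum_le_sum fun i hi => ?_
    rw [← Finset.mul_sum, mul_comm]
    exact mul_le_mul_of_nonneg_right (hoff i hi) (sq_nonneg _)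
  have hcols : ∑ i ∈ S, ∑ j ∈ S.erase i, ‖c j‖ ^ 2 * ‖⟪v i, v j⟫_𝕜‖ =
      ∑ i ∈ S, ∑ j ∈ S.erase i, ‖c i‖ ^ 2 * ‖⟪v i, v j⟫_𝕜‖ := by
    rw [sum_sum_erase_comm]
    simp_rw [norm_inner_symm]
  have hoffSum : -∑ i ∈ S, ∑ j ∈ S.erase i, ‖c i‖ ^ 2 * ‖⟪v i, v j⟫_𝕜‖ ≤
      ∑ i ∈ S, ∑ j ∈ S.erase i, RCLike.re ⟪c i • v i, c j • v j⟫_𝕜 :=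
    calc _ = ∑ i ∈ S, ∑ j ∈ S.erase i, -((‖c i‖ ^ 2 + ‖c j‖ ^ 2) / 2 * ‖⟪v i, v j⟫_𝕜‖) := by
          simp only [add_div, add_mul, div_mul_eq_mul_div, Finset.sum_neg_distrib,
            Finset.sum_add_distrib, ← Finset.sum_div, hcols, add_halves]
      _ ≤ _ := Finset.sum_le_sum fun i _ => Finset.sum_le_sum fun j _ =>
          neg_mul_norm_inner_le_re_inner_smul _ _ _ _
  rw [norm_sum_sq_eq_diag_add_offDiag (𝕜 := 𝕜)]
  linarith

variable {X : Type*} [MeasurableSpace X] {μ : Measure X} {f : ι → X → 𝕜}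

lemma inner_toLp_eq_integral_conj_mul {f g : X → 𝕜} (hf : MemLp f 2 μ) (hg : MemLp g 2 μ) :
    ⟪hf.toLp f, hg.toLp g⟫_𝕜 = ∫ x, conj (f x) * g x ∂μ := by
  rw [L2.inner_def]
  refine integral_congr_ae ?_
  filter_upwards [hf.coeFn_toLp, hg.coeFn_toLp] with x hfx hgx
  rw [hfx, hgx, RCLike.inner_apply, mul_comm]

lemma norm_toLp_sq_eq_integral_norm_sq {f : X → 𝕜} (hf : MemLp f 2 μ) :
    ‖hf.toLp f‖ ^ 2 = ∫ x, ‖f x‖ ^ 2 ∂μ := by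
  have h : ((‖hf.toLp f‖ ^ 2 : ℝ) : 𝕜) = ((∫ x, ‖f x‖ ^ 2 ∂μ : ℝ) : 𝕜) := by
    rw [RCLike.ofReal_pow, ← inner_self_eq_norm_sq_to_K, inner_toLp_eq_integral_conj_mul,
      ← integral_ofReal]
    simp_rw [RCLike.conj_mul, RCLike.ofReal_pow]
  exact_mod_cast h

lemma sub_mul_sum_sq_le_integral_norm_sum_sq {S : Finset ι} {D R : ℝ} (c : ι → 𝕜)
    (hf : ∀ i, MemLp (f i) 2 μ) (hdiag : ∀ i ∈ S, D ≤ ∫ x, ‖f i x‖ ^ 2 ∂μ)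
    (hoff : ∀ i ∈ S, ∑ j ∈ S.erase i, ‖∫ x, conj (f i x) * f j x ∂μ‖ ≤ R) :
    (D - R) * ∑ i ∈ S, ‖c i‖ ^ 2 ≤ ∫ x, ‖∑ i ∈ S, c i * f i x‖ ^ 2 ∂μ := by
  have hsum : MemLp (fun x => ∑ i ∈ S, c i * f i x) 2 μ :=
    memLp_finsetSum S fun i _ => (hf i).const_mul (c i)
  have htoLp : ∑ i ∈ S, c i • (hf i).toLp (f i) = hsum.toLp _ := by
    have hterm := (Finset.eventually_all S).2 fun i _ =>
      (Lp.coeFn_smul (c i) ((hf i).toLp (f i))).and (hf i).coeFn_toLp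
    refine Lp.ext ?_
    filter_upwards [Lp.coeFn_finsetSum S fun i => c i • (hf i).toLp (f i), hsum.coeFn_toLp,
      hterm] with x hx hsumx htermx
    rw [hx, hsumx, Finset.sum_apply]
    refine Finset.sum_congr rfl fun i hi => ?_
    rw [(htermx i hi).1, Pi.smul_apply, (htermx i hi).2, smul_eq_mul]
  rw [← norm_toLp_sq_eq_integral_norm_sq hsum, ← htoLp]
  refine sub_mul_sum_sq_le_norm_sum_smul_sq c (fun i hi => ?_) (fun i hi => ?_)
  · rw [norm_toLp_sq_eq_integral_norm_sq]
    exact hdiag i hi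
  · simp_rw [inner_toLp_eq_integral_conj_mul]
    exact hoff i hi

end Gershgorin

/-! ### First-derivative test -/

open Real in
lemma two_pi_I_mul_integral_fourierChar_comp {a b : ℝ} {f f' f'' : ℝ → ℝ}
    (hf : ∀ t ∈ uIcc a b, HasDerivAt f (f' t) t) (hf' : ∀ t ∈ uIcc a b, HasDerivAt f' (f'' t) t)
    (hint : IntervalIntegrable f'' volume a b) (hne : ∀ t ∈ uIcc a b, f' t ≠ 0) :
    2 * π * Complex.I * ∫ t in a..b, (𝐞 (f t) : ℂ) =
      (f' b : ℂ)⁻¹ * 𝐞 (f b) - (f' a : ℂ)⁻¹ * 𝐞 (f a) +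
        ∫ t in a..b, (f'' t / f' t ^ 2 : ℝ) * (𝐞 (f t) : ℂ) := by
  have hcont : ContinuousOn f' (uIcc a b) := HasDerivAt.continuousOn hf'
  have hcont_wave : ContinuousOn (fun t => (𝐞 (f t) : ℂ)) (uIcc a b) :=
    differentiable_fourierChar.continuous.comp_continuousOn (HasDerivAt.continuousOn hf)
  have hinv : ∀ t ∈ uIcc a b,
      HasDerivAt (fun t => (f' t : ℂ)⁻¹) ((-(f'' t / f' t ^ 2) : ℝ) : ℂ) t := fun t ht => by
    simpa [neg_div] using ((hf' t ht).inv (hne t ht)).ofReal_comp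
  have hwave : ∀ t ∈ uIcc a b,
      HasDerivAt (fun t => (𝐞 (f t) : ℂ)) (f' t * (2 * π * Complex.I * 𝐞 (f t))) t :=
    fun t ht => (hasDerivAt_fourierChar (f t)).scomp t (hf t ht)
  have hint_inv : IntervalIntegrable (fun t => -(f'' t / f' t ^ 2)) volume a b := by
    simp_rw [div_eq_mul_inv]
    exact (hint.mul_continuousOn ((hcont.pow 2).inv₀ fun t ht => pow_ne_zero 2 (hne t ht))).neg
  have hparts := intervalIntegral.integral_mul_deriv_eq_deriv_mul hinv hwave
    ⟨hint_inv.1.ofReal, hint_inv.2.ofReal⟩ (ContinuousOn.intervalIntegrable (by fun_prop))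
  rw [← intervalIntegral.integral_const_mul]
  calc ∫ t in a..b, 2 * π * Complex.I * (𝐞 (f t) : ℂ) =
        ∫ t in a..b, (f' t : ℂ)⁻¹ * (f' t * (2 * π * Complex.I * 𝐞 (f t))) :=
      intervalIntegral.integral_congr fun t ht =>
        (inv_mul_cancel_left₀ (Complex.ofReal_ne_zero.2 (hne t ht)) _).symm
    _ = _ := by
      rw [hparts]
      simp only [Complex.ofReal_neg, neg_mul, intervalIntegral.integral_neg, sub_neg_eq_add]

open Real in
lemma norm_integral_fourierChar_comp_le {a b L K : ℝ} {f f' f'' : ℝ → ℝ} (hab : a ≤ b)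
    (hL : 0 < L) (hf : ∀ t ∈ Icc a b, HasDerivAt f (f' t) t)
    (hf' : ∀ t ∈ Icc a b, HasDerivAt f' (f'' t) t) (hint : IntervalIntegrable f'' volume a b)
    (hlower : ∀ t ∈ Icc a b, L ≤ |f' t|) (hK : ∀ t ∈ Icc a b, |f'' t| ≤ K * |f' t|) :
    ‖∫ t in a..b, (𝐞 (f t) : ℂ)‖ ≤ (2 + K * (b - a)) / (2 * π * L) := by
  have hpos : ∀ t ∈ Icc a b, 0 < |f' t| := fun t ht => hL.trans_le (hlower t ht)
  have hinv : ∀ t ∈ Icc a b, |f' t|⁻¹ ≤ L⁻¹ := fun t ht => inv_anti₀ hL (hlower t ht)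
  have hboundary : ∀ t ∈ Icc a b, ‖(f' t : ℂ)⁻¹ * 𝐞 (f t)‖ ≤ L⁻¹ := fun t ht => by
    rw [norm_mul, Circle.norm_coe, mul_one, norm_inv, Complex.norm_real, Real.norm_eq_abs]
    exact hinv t ht
  have hintegrand : ∀ t ∈ Icc a b, ‖((f'' t / f' t ^ 2 : ℝ) : ℂ) * 𝐞 (f t)‖ ≤ K * L⁻¹ := by
    intro t ht
    have hK0 : 0 ≤ K := nonneg_of_mul_nonneg_left ((abs_nonneg _).trans (hK t ht)) (hpos t ht)
    calc ‖((f'' t / f' t ^ 2 : ℝ) : ℂ) * 𝐞 (f t)‖ = |f'' t| / |f' t| ^ 2 := by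
          rw [norm_mul, Circle.norm_coe, mul_one, Complex.norm_real, Real.norm_eq_abs, abs_div,
            abs_pow]
      _ ≤ K * |f' t| / |f' t| ^ 2 := by gcongr; exact hK t ht
      _ = K * |f' t|⁻¹ := by field_simp [(hpos t ht).ne']
      _ ≤ K * L⁻¹ := mul_le_mul_of_nonneg_left (hinv t ht) hK0
  have hidentity := two_pi_I_mul_integral_fourierChar_comp (f := f) (by rwa [uIcc_of_le hab])
    (by rwa [uIcc_of_le hab]) hint
    (by rw [uIcc_of_le hab]; exact fun t ht => abs_pos.1 (hpos t ht))
  have hremainder : ‖∫ t in a..b, ((f'' t / f' t ^ 2 : ℝ) : ℂ) * 𝐞 (f t)‖ ≤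
      K * L⁻¹ * (b - a) := by
    rw [← abs_of_nonneg (sub_nonneg.2 hab)]
    refine intervalIntegral.norm_integral_le_of_norm_le_const fun t ht => hintegrand t ?_
    exact Ioc_subset_Icc_self (by rwa [uIoc_of_le hab] at ht)
  have hscaled : 2 * π * ‖∫ t in a..b, (𝐞 (f t) : ℂ)‖ ≤ L⁻¹ + L⁻¹ + K * L⁻¹ * (b - a) :=
    calc _ = ‖2 * π * Complex.I * ∫ t in a..b, (𝐞 (f t) : ℂ)‖ := by
          simp [abs_of_pos pi_pos]
      _ ≤ _ := by
          rw [hidentity]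
          refine (norm_add_le _ _).trans (add_le_add ((norm_sub_le _ _).trans ?_) hremainder)
          exact add_le_add (hboundary b (right_mem_Icc.2 hab)) (hboundary a (left_mem_Icc.2 hab))
  rw [le_div_iff₀ (by positivity)]
  calc _ = 2 * π * ‖∫ t in a..b, (𝐞 (f t) : ℂ)‖ * L := by ring
    _ ≤ (L⁻¹ + L⁻¹ + K * L⁻¹ * (b - a)) * L := by gcongr
    _ = 2 + K * (b - a) := by field_simp; ring

/-! ### Frequency gaps -/

lemma summable_inv_one_add_int_sq : Summable fun k : ℤ => (1 + (k : ℝ) ^ 2)⁻¹ := by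
  refine (Real.summable_one_div_int_pow.2 one_lt_two).of_norm_bounded_eventually ?_
  filter_upwards [(finite_singleton (0 : ℤ)).compl_mem_cofinite] with k hk
  have hk : (k : ℝ) ≠ 0 := by simpa using hk
  rw [Real.norm_of_nonneg (by positivity), one_div]
  gcongr
  linarith

lemma sum_abs_sub_abs_le_two_mul_tsum {g : ℤ → ℝ} (hg : Summable g) (hg0 : ∀ k, 0 ≤ g k)
    (heven : ∀ k, g (-k) = g k) (S : Finset ℤ) (n : ℤ) :
    ∑ m ∈ S, g (|n| - |m|) ≤ 2 * ∑' k, g k := by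
  have hsub : ∑ m ∈ S, g (n - m) ≤ ∑' k, g k := by
    rw [← (Equiv.subLeft n).tsum_eq]
    exact ((Equiv.subLeft n).summable_iff.2 hg).sum_le_tsum S fun k _ => hg0 _
  have hadd : ∑ m ∈ S, g (n + m) ≤ ∑' k, g k := by
    rw [← (Equiv.addLeft n).tsum_eq]
    exact ((Equiv.addLeft n).summable_iff.2 hg).sum_le_tsum S fun k _ => hg0 _
  have hterm : ∀ m, g (|n| - |m|) ≤ g (n - m) + g (n + m) := fun m => by
    have hneg_sub : g (-n - m) = g (n + m) := by rw [← heven, neg_sub, sub_neg_eq_add, add_comm]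
    have hneg_add : g (-n + m) = g (n - m) := by rw [← heven, neg_add, neg_neg, sub_eq_add_neg]
    rcases abs_choice n with hn | hn <;> rcases abs_choice m with hm | hm <;>
      simp only [hn, hm, sub_neg_eq_add, hneg_sub, hneg_add] <;>
      linarith [hg0 (n - m), hg0 (n + m)]
  calc ∑ m ∈ S, g (|n| - |m|) ≤ ∑ m ∈ S, (g (n - m) + g (n + m)) :=
        Finset.sum_le_sum fun m _ => hterm m
    _ ≤ 2 * ∑' k, g k := by rw [Finset.sum_add_distrib]; linarith

lemma rpow_sub_one_mul_sub_le_rpow_sub_rpow {s x y : ℝ} (hs : 1 ≤ s) (hy : 0 ≤ y) (hxy : y ≤ x) :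
    x ^ (s - 1) * (x - y) ≤ x ^ s - y ^ s := by
  have hsplit : ∀ z : ℝ, 0 ≤ z → z ^ s = z ^ (s - 1) * z := fun z hz => by
    rw [← Real.rpow_add_one' hz (by linarith), sub_add_cancel]
  rw [hsplit x (hy.trans hxy), hsplit y hy, mul_sub]
  gcongr

/-- The phase `n p(t) + |n|^s t` of the `n`-th curved wave along the curve `p`, in units of full
turns: the wave itself is `𝐞 (curvedPhase p s n t)`. -/
noncomputable def curvedPhase (p : ℝ → ℝ) (s : ℝ) (n : ℤ) (t : ℝ) : ℝ :=
  n * p t + |(n : ℝ)| ^ s * t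

/-- The instantaneous frequency `n q + |n|^s` of the `n`-th curved wave, i.e. the time derivative
of its phase, at a point where the curve has slope `q`. -/
noncomputable def curvedFreq (s q : ℝ) (n : ℤ) : ℝ := n * q + |(n : ℝ)| ^ s

/-- The index `n` is high-frequency at level `A`. The first bound separates `n` from `-n`, whose
frequencies differ only by the drift `2 n q`; the second makes the dispersion `|n|^s` dominate the
drift `n q` whenever `|q|` is small compared with `A`. -/
def IsHighFreq (s A : ℝ) (n : ℤ) : Prop := A ≤ |(n : ℝ)| ∧ A ≤ |(n : ℝ)| ^ (s - 2)

section FrequencyGap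

variable {s q A κ : ℝ} {n m : ℤ}

lemma exists_forall_le_abs_isHighFreq (hs : 2 < s) (A : ℝ) :
    ∃ N : ℕ, ∀ n : ℤ, (N : ℤ) ≤ |n| → IsHighFreq s A n := by
  obtain ⟨X, hX⟩ := eventually_atTop.1 ((eventually_ge_atTop A).and
    ((tendsto_rpow_atTop (sub_pos.2 hs)).eventually_ge_atTop A))
  refine ⟨⌈X⌉₊, fun n hn => hX _ ((Nat.le_ceil X).trans ?_)⟩
  exact_mod_cast hn

lemma mul_abs_mul_le_abs_curvedFreq_sub (hs : 1 ≤ s) (hn : IsHighFreq s A n)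
    (hq : 4 * |q| ≤ A) (hmn : |m| < |n|) :
    A / 2 * |(n : ℝ)| * (|(n : ℝ)| - |(m : ℝ)|) ≤ |curvedFreq s q n - curvedFreq s q m| := by
  have hgap : |(m : ℝ)| + 1 ≤ |(n : ℝ)| := by exact_mod_cast hmn
  have hn0 : 0 < |(n : ℝ)| := by linarith [abs_nonneg (m : ℝ)]
  have hdisp : A * |(n : ℝ)| * (|(n : ℝ)| - |(m : ℝ)|) ≤ |(n : ℝ)| ^ s - |(m : ℝ)| ^ s :=
    calc _ ≤ |(n : ℝ)| ^ (s - 2) * |(n : ℝ)| * (|(n : ℝ)| - |(m : ℝ)|) := by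
          gcongr
          exacts [by linarith, hn.2]
      _ = |(n : ℝ)| ^ (s - 1) * (|(n : ℝ)| - |(m : ℝ)|) := by
        rw [← Real.rpow_add_one hn0.ne']; ring_nf
      _ ≤ _ := rpow_sub_one_mul_sub_le_rpow_sub_rpow hs (abs_nonneg _) (by linarith)
  have hdrift : |((n : ℝ) - m) * q| ≤ A / 2 * |(n : ℝ)| * (|(n : ℝ)| - |(m : ℝ)|) :=
    calc _ ≤ (2 * |(n : ℝ)|) * (A / 4) := by
          rw [abs_mul]
          gcongr
          · linarith [abs_sub (n : ℝ) m]
          · linarith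
      _ = A / 2 * |(n : ℝ)| * 1 := by ring
      _ ≤ _ := by
        have hA : 0 ≤ A := by linarith [abs_nonneg q]
        gcongr
        linarith
  calc _ ≤ ((n : ℝ) - m) * q + (|(n : ℝ)| ^ s - |(m : ℝ)| ^ s) := by
        linarith [neg_le_of_abs_le hdrift]
    _ = curvedFreq s q n - curvedFreq s q m := by unfold curvedFreq; ring
    _ ≤ _ := le_abs_self _

lemma abs_curvedFreq_sub_neg : |curvedFreq s q n - curvedFreq s q (-n)| = 2 * |(n : ℝ)| * |q| := by
  have hdrift : curvedFreq s q n - curvedFreq s q (-n) = 2 * n * q := by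
    unfold curvedFreq; push_cast; rw [abs_neg]; ring
  rw [hdrift, abs_mul, abs_mul, abs_two]

lemma mul_abs_sub_le_abs_curvedFreq_sub (hs : 1 ≤ s) (hnm : n ≠ m) (hA : 1 ≤ A)
    (hn : IsHighFreq s A n) (hm : IsHighFreq s A m) (hκ : κ ≤ 1 / 4) (hκq : κ ≤ |q|)
    (hq : 4 * |q| ≤ A) :
    κ * |(n : ℝ) - m| ≤ |curvedFreq s q n - curvedFreq s q m| := by
  wlog hmn : |m| ≤ |n| generalizing n m
  · rw [abs_sub_comm, abs_sub_comm (curvedFreq s q n)]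
    exact this hnm.symm hm hn (le_of_not_ge hmn)
  rcases hmn.lt_or_eq with hlt | heq
  · have hgap : |(m : ℝ)| + 1 ≤ |(n : ℝ)| := by exact_mod_cast hlt
    have hsub : |(n : ℝ) - m| ≤ 2 * |(n : ℝ)| := by linarith [abs_sub (n : ℝ) m]
    calc κ * |(n : ℝ) - m| ≤ 1 / 4 * (2 * |(n : ℝ)|) := by gcongr
      _ = 1 / 2 * |(n : ℝ)| * 1 := by ring
      _ ≤ A / 2 * |(n : ℝ)| * (|(n : ℝ)| - |(m : ℝ)|) := by gcongr; linarith
      _ ≤ _ := mul_abs_mul_le_abs_curvedFreq_sub hs hn hq hlt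
  · obtain rfl := (abs_eq_abs.1 heq).resolve_left hnm.symm
    rw [abs_curvedFreq_sub_neg, Int.cast_neg, sub_neg_eq_add, ← two_mul, abs_mul, abs_two, mul_comm]
    gcongr

lemma mul_one_add_sq_le_abs_curvedFreq_sub (hs : 1 ≤ s) (hnm : n ≠ m) (hA : 0 ≤ A)
    (hn : IsHighFreq s A n) (hm : IsHighFreq s A m) (hκ0 : 0 ≤ κ) (hκ : κ ≤ 1 / 4) (hκq : κ ≤ |q|)
    (hq : 4 * |q| ≤ A) :
    κ * A * (1 + (|(n : ℝ)| - |(m : ℝ)|) ^ 2) ≤ |curvedFreq s q n - curvedFreq s q m| := by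
  wlog hmn : |m| ≤ |n| generalizing n m
  · rw [abs_sub_comm (curvedFreq s q n), ← neg_sub |(m : ℝ)|, neg_sq]
    exact this hnm.symm hm hn (le_of_not_ge hmn)
  rcases hmn.lt_or_eq with hlt | heq
  · refine le_trans ?_ (mul_abs_mul_le_abs_curvedFreq_sub hs hn hq hlt)
    set δ := |(n : ℝ)| - |(m : ℝ)|
    have hδ1 : 1 ≤ δ := le_sub_iff_add_le'.2 (by exact_mod_cast hlt)
    have hδn : δ ≤ |(n : ℝ)| := sub_le_self _ (abs_nonneg _)
    calc κ * A * (1 + δ ^ 2) ≤ 1 / 4 * A * (δ ^ 2 + δ ^ 2) := by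
          gcongr; exact one_le_pow₀ hδ1
      _ = A / 2 * δ * δ := by ring
      _ ≤ A / 2 * |(n : ℝ)| * δ := by gcongr
  · obtain rfl := (abs_eq_abs.1 heq).resolve_left hnm.symm
    rw [abs_curvedFreq_sub_neg, Int.cast_neg, abs_neg, sub_self, zero_pow two_ne_zero, add_zero,
      mul_one, mul_comm]
    gcongr
    linarith [hn.1, abs_nonneg (n : ℝ)]

end FrequencyGap

/-! ### Gram matrix of the curved waves -/

lemma conj_fourierChar_mul_fourierChar (x y : ℝ) : conj (𝐞 x : ℂ) * 𝐞 y = (𝐞 (y - x) : ℂ) := by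
  rw [← Circle.coe_inv_eq_conj, ← AddChar.map_neg_eq_inv, ← Circle.coe_mul,
    ← AddChar.map_add_eq_mul, neg_add_eq_sub]

lemma hasDerivAt_curvedPhase {p : ℝ → ℝ} {p' t : ℝ} (hp : HasDerivAt p p' t) (s : ℝ) (n : ℤ) :
    HasDerivAt (curvedPhase p s n) (curvedFreq s p' n) t :=
  ((hp.const_mul (n : ℝ)).add ((hasDerivAt_id t).const_mul (|(n : ℝ)| ^ s))).congr_deriv <| by
    rw [mul_one, curvedFreq]

lemma hasDerivAt_curvedFreq {q : ℝ → ℝ} {q' t : ℝ} (hq : HasDerivAt q q' t) (s : ℝ) (n : ℤ) :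
    HasDerivAt (fun t => curvedFreq s (q t) n) (n * q') t :=
  (hq.const_mul (n : ℝ)).add_const _

lemma continuousOn_fourierChar_curvedPhase {p : ℝ → ℝ} {I : Set ℝ} (hp : ContinuousOn p I)
    (s : ℝ) (n : ℤ) : ContinuousOn (fun t => (𝐞 (curvedPhase p s n t) : ℂ)) I := by
  refine Real.differentiable_fourierChar.continuous.comp_continuousOn ?_
  unfold curvedPhase
  fun_prop

/-- Quantitative absence of stationary points: the curve `p` is twice continuously differentiable
at the points of `I`, with `|p'|` between `κ` and `B` and with `|p''|` at most `M`. The constants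
are those entering the first-derivative test for differences of curved phases. -/
structure IsNonstationaryOn (p : ℝ → ℝ) (κ B M : ℝ) (I : Set ℝ) : Prop where
  contDiffAt : ∀ t ∈ I, ContDiffAt ℝ 2 p t
  le_abs_deriv : ∀ t ∈ I, κ ≤ |deriv p t|
  abs_deriv_le : ∀ t ∈ I, |deriv p t| ≤ B
  abs_deriv_deriv_le : ∀ t ∈ I, |deriv (deriv p) t| ≤ M

namespace IsNonstationaryOn

variable {p : ℝ → ℝ} {s a b κ B M A : ℝ} {I : Set ℝ}

lemma continuousOn (h : IsNonstationaryOn p κ B M I) : ContinuousOn p I :=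
  fun t ht => (h.contDiffAt t ht).continuousAt.continuousWithinAt

lemma hasDerivAt (h : IsNonstationaryOn p κ B M I) :
    ∀ t ∈ I, HasDerivAt p (deriv p t) t :=
  fun t ht => ((h.contDiffAt t ht).differentiableAt two_ne_zero).hasDerivAt

lemma contDiffAt_deriv (h : IsNonstationaryOn p κ B M I) :
    ∀ t ∈ I, ContDiffAt ℝ 1 (deriv p) t :=
  fun t ht => (h.contDiffAt t ht).derivWithin one_add_one_eq_two.le

lemma hasDerivAt_deriv (h : IsNonstationaryOn p κ B M I) :
    ∀ t ∈ I, HasDerivAt (deriv p) (deriv (deriv p) t) t :=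
  fun t ht => ((h.contDiffAt_deriv t ht).differentiableAt one_ne_zero).hasDerivAt

lemma continuousOn_deriv_deriv (h : IsNonstationaryOn p κ B M I) :
    ContinuousOn (deriv (deriv p)) I := fun t ht =>
  ((h.contDiffAt_deriv t ht).derivWithin (m := 0) (zero_add 1).le).continuousAt.continuousWithinAt

open Real in
lemma norm_integral_conj_mul_fourierChar_curvedPhase_le
    (h : IsNonstationaryOn p κ B M (Icc a b)) (hab : a ≤ b) (hs : 1 ≤ s) (hκ : 0 < κ)
    (hκ' : κ ≤ 1 / 4) (hA : 1 ≤ A) (hB : 4 * B ≤ A) {n m : ℤ} (hnm : n ≠ m)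
    (hn : IsHighFreq s A n) (hm : IsHighFreq s A m) :
    ‖∫ t in a..b, conj (𝐞 (curvedPhase p s n t) : ℂ) * 𝐞 (curvedPhase p s m t)‖ ≤
      (2 + M / κ * (b - a)) / (2 * π * (κ * A * (1 + (|(m : ℝ)| - |(n : ℝ)|) ^ 2))) := by
  simp_rw [conj_fourierChar_mul_fourierChar]
  have hslope : ∀ t ∈ Icc a b, 4 * |deriv p t| ≤ A := fun t ht => by
    linarith [h.abs_deriv_le t ht]
  refine norm_integral_fourierChar_comp_le hab (by positivity)
    (fun t ht => (hasDerivAt_curvedPhase (h.hasDerivAt t ht) s m).sub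
      (hasDerivAt_curvedPhase (h.hasDerivAt t ht) s n))
    (fun t ht => (hasDerivAt_curvedFreq (h.hasDerivAt_deriv t ht) s m).sub
      (hasDerivAt_curvedFreq (h.hasDerivAt_deriv t ht) s n)) ?_
    (fun t ht => mul_one_add_sq_le_abs_curvedFreq_sub hs hnm.symm (by linarith) hm hn hκ.le hκ'
      (h.le_abs_deriv t ht) (hslope t ht)) fun t ht => ?_
  · have hcont := h.continuousOn_deriv_deriv
    rw [← uIcc_of_le hab] at hcont
    exact ContinuousOn.intervalIntegrable (by fun_prop)
  · have hM : 0 ≤ M := (abs_nonneg _).trans (h.abs_deriv_deriv_le t ht)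
    have hgap := mul_abs_sub_le_abs_curvedFreq_sub hs hnm.symm hA hm hn hκ'
      (h.le_abs_deriv t ht) (hslope t ht)
    calc |m * deriv (deriv p) t - n * deriv (deriv p) t|
        = |(m : ℝ) - n| * |deriv (deriv p) t| := by rw [← sub_mul, abs_mul]
      _ ≤ |(m : ℝ) - n| * M := by gcongr; exact h.abs_deriv_deriv_le t ht
      _ = M / κ * (κ * |(m : ℝ) - n|) := by field_simp
      _ ≤ _ := by gcongr

open Real in
lemma sum_erase_norm_integral_conj_mul_fourierChar_curvedPhase_le
    (h : IsNonstationaryOn p κ B M (Icc a b)) (hab : a ≤ b) (hs : 1 ≤ s) (hκ : 0 < κ)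
    (hκ' : κ ≤ 1 / 4) (hA : 1 ≤ A) (hB : 4 * B ≤ A) {S : Finset ℤ}
    (hS : ∀ n ∈ S, IsHighFreq s A n) {n : ℤ} (hn : n ∈ S) :
    ∑ m ∈ S.erase n,
        ‖∫ t in a..b, conj (𝐞 (curvedPhase p s n t) : ℂ) * 𝐞 (curvedPhase p s m t)‖ ≤
      (2 + M / κ * (b - a)) / (π * κ) * (∑' k : ℤ, (1 + (k : ℝ) ^ 2)⁻¹) / A := by
  have hM : 0 ≤ M := (abs_nonneg _).trans (h.abs_deriv_deriv_le a (left_mem_Icc.2 hab))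
  have hba : 0 ≤ b - a := sub_nonneg.2 hab
  have hrow := sum_abs_sub_abs_le_two_mul_tsum summable_inv_one_add_int_sq
    (fun k => by positivity) (fun k => by rw [Int.cast_neg, neg_sq]) (S.erase n) n
  calc _ ≤ ∑ m ∈ S.erase n, (2 + M / κ * (b - a)) / (2 * π * κ * A) *
        (1 + ((|n| - |m| : ℤ) : ℝ) ^ 2)⁻¹ := by
        refine Finset.sum_le_sum fun m hm => ?_
        obtain ⟨hmn, hmS⟩ := Finset.mem_erase.1 hm
        refine (h.norm_integral_conj_mul_fourierChar_curvedPhase_le hab hs hκ hκ' hA hB hmn.symm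
          (hS n hn) (hS m hmS)).trans_eq ?_
        push_cast
        rw [← neg_sub |(n : ℝ)|, neg_sq, ← div_eq_mul_inv, div_div]
        ring_nf
    _ ≤ (2 + M / κ * (b - a)) / (2 * π * κ * A) * (2 * ∑' k : ℤ, (1 + (k : ℝ) ^ 2)⁻¹) := by
        rw [← Finset.mul_sum]
        gcongr
    _ = _ := by field_simp

lemma exists_forall_half_length_mul_sum_sq_le (h : IsNonstationaryOn p κ B M (Icc a b))
    (hab : a < b) (hs : 2 < s) (hκ : 0 < κ) (hκ' : κ ≤ 1 / 4) :
    ∃ N : ℕ, ∀ S : Finset ℤ, (∀ n ∈ S, (N : ℤ) ≤ |n|) → ∀ c : ℤ → ℂ,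
      (b - a) / 2 * ∑ n ∈ S, ‖c n‖ ^ 2 ≤
        ∫ t in a..b, ‖∑ n ∈ S, c n * 𝐞 (curvedPhase p s n t)‖ ^ 2 := by
  set Q := (2 + M / κ * (b - a)) / (Real.pi * κ) * ∑' k : ℤ, (1 + (k : ℝ) ^ 2)⁻¹
  obtain ⟨A, hA, hB, hQ⟩ : ∃ A, 1 ≤ A ∧ 4 * B ≤ A ∧ Q / ((b - a) / 2) ≤ A :=
    ((eventually_ge_atTop 1).and ((eventually_ge_atTop _).and (eventually_ge_atTop _))).exists
  obtain ⟨N, hN⟩ := exists_forall_le_abs_isHighFreq hs A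
  refine ⟨N, fun S hS c => ?_⟩
  have hlength : 0 < (b - a) / 2 := half_pos (sub_pos.2 hab)
  have hQA : Q / A ≤ (b - a) / 2 := (div_le_comm₀ hlength (by positivity)).1 hQ
  have hmemLp (n : ℤ) :
      MemLp (fun t => (𝐞 (curvedPhase p s n t) : ℂ)) 2 (volume.restrict (Ioc a b)) :=
    .of_bound (((continuousOn_fourierChar_curvedPhase h.continuousOn s n).mono
      Ioc_subset_Icc_self).aestronglyMeasurable measurableSet_Ioc) 1
      (.of_forall fun t => (Circle.norm_coe _).le)
  rw [intervalIntegral.integral_of_le hab.le]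
  refine le_of_eq_of_le ?_ (sub_mul_sum_sq_le_integral_norm_sum_sq (D := b - a)
    (R := (b - a) / 2) c hmemLp (fun n _ => ?_) fun n hn => ?_)
  · rw [sub_half]
  · simp [Circle.norm_coe, hab.le]
  · simp_rw [← intervalIntegral.integral_of_le hab.le]
    exact (h.sum_erase_norm_integral_conj_mul_fourierChar_curvedPhase_le hab.le (by linarith) hκ
      hκ' hA hB (fun m hm => hN m (hS m hm)) hn).trans hQA

end IsNonstationaryOn

lemma exists_Icc_subset_isNonstationaryOn {p : ℝ → ℝ} {t₀ : ℝ} {U : Set ℝ} (hU : U ∈ 𝓝 t₀)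
    (hp : ContDiffAt ℝ 2 p t₀) (hp' : deriv p t₀ ≠ 0) :
    ∃ a b κ B M, a < b ∧ Icc a b ⊆ U ∧ 0 < κ ∧ κ ≤ 1 / 4 ∧
      IsNonstationaryOn p κ B M (Icc a b) := by
  have hp1 : ContDiffAt ℝ 1 (deriv p) t₀ := hp.derivWithin one_add_one_eq_two.le
  have hp2 : ContinuousAt (deriv (deriv p)) t₀ :=
    (hp1.derivWithin (m := 0) (zero_add 1).le).continuousAt
  have hslope : 0 < |deriv p t₀| := abs_pos.2 hp'
  have hnear : ∀ᶠ t in 𝓝 t₀, t ∈ U ∧ ContDiffAt ℝ 2 p t ∧ |deriv p t₀| / 2 ≤ |deriv p t| ∧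
      |deriv p t| ≤ |deriv p t₀| + 1 ∧ |deriv (deriv p) t| ≤ |deriv (deriv p) t₀| + 1 := by
    filter_upwards [hU, hp.eventually (by simp),
      hp1.continuousAt.abs.eventually_const_le (half_lt_self hslope),
      hp1.continuousAt.abs.eventually_le_const (lt_add_one _),
      hp2.abs.eventually_le_const (lt_add_one _)] with t htU hsmooth hlower hupper hsecond
    exact ⟨htU, hsmooth, hlower, hupper, hsecond⟩
  obtain ⟨ε, hε, hball⟩ := Metric.nhds_basis_closedBall.eventually_iff.1 hnear
  rw [Real.closedBall_eq_Icc] at hball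
  exact ⟨t₀ - ε, t₀ + ε, min (1 / 4) (|deriv p t₀| / 2), _, _, by linarith,
    fun t ht => (hball ht).1, by positivity, min_le_left _ _,
    fun t ht => (hball ht).2.1, fun t ht => (min_le_right _ _).trans (hball ht).2.2.1,
    fun t ht => (hball ht).2.2.2.1, fun t ht => (hball ht).2.2.2.2⟩

lemma exp_eq_fourierChar_curvedPhase (p : ℝ → ℝ) (s : ℝ) (n : ℤ) (t : ℝ) :
    Complex.exp (2 * Real.pi * Complex.I *
      ((n : ℂ) * (p t : ℂ) + ((|(n : ℝ)| ^ s : ℝ) : ℂ) * (t : ℂ))) = 𝐞 (curvedPhase p s n t) := by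
  rw [Real.fourierChar_apply, curvedPhase]
  push_cast
  ring_nf

theorem highfreq_curved_ingham_general {s a b t₀ : ℝ} {p : ℝ → ℝ} (hs : 2 < s)
    (ht₀ : t₀ ∈ Ioo a b) (hcont : ContinuousOn p (Icc a b)) (hp : ContDiffAt ℝ 2 p t₀)
    (hp' : deriv p t₀ ≠ 0) :
    ∃ N₀ : ℕ, ∃ C : ℝ, 0 < C ∧ ∀ N : ℕ, N₀ ≤ N → ∀ c : ℤ → ℂ, {n : ℤ | c n ≠ 0}.Finite →
      (∀ n : ℤ, |n| < (N : ℤ) → c n = 0) →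
      C * ∑' n : ℤ, ‖c n‖ ^ 2 ≤
        ∫ t in a..b, ‖∑' n : ℤ, c n * Complex.exp (2 * Real.pi * Complex.I *
          ((n : ℂ) * (p t : ℂ) + ((|(n : ℝ)| ^ s : ℝ) : ℂ) * (t : ℂ)))‖ ^ 2 := by
  obtain ⟨a', b', κ, B, M, hab', hsub, hκ, hκ', hns⟩ :=
    exists_Icc_subset_isNonstationaryOn (Ioo_mem_nhds ht₀.1 ht₀.2) hp hp'
  obtain ⟨N₀, hN₀⟩ := hns.exists_forall_half_length_mul_sum_sq_le hab' hs hκ hκ'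
  refine ⟨N₀, (b' - a') / 2, half_pos (sub_pos.2 hab'), fun N hN c hfin hc => ?_⟩
  have hzero : ∀ n ∉ hfin.toFinset, c n = 0 := fun n hn => by simpa using hn
  have hlarge : ∀ n ∈ hfin.toFinset, (N₀ : ℤ) ≤ |n| := fun n hn =>
    (Nat.cast_le.2 hN).trans (not_lt.1 (mt (hc n) (hfin.mem_toFinset.1 hn)))
  have hwave (t : ℝ) : ∑' n : ℤ, c n * (𝐞 (curvedPhase p s n t) : ℂ) =
      ∑ n ∈ hfin.toFinset, c n * 𝐞 (curvedPhase p s n t) :=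
    tsum_eq_sum fun n hn => by rw [hzero n hn, zero_mul]
  simp_rw [exp_eq_fourierChar_curvedPhase, hwave]
  rw [tsum_eq_sum fun n hn => by rw [hzero n hn, norm_zero, zero_pow two_ne_zero]]
  have hab : a ≤ b := (ht₀.1.trans ht₀.2).le
  refine (hN₀ _ hlarge c).trans (intervalIntegral.integral_mono_interval
    (hsub (left_mem_Icc.2 hab'.le)).1.le hab'.le (hsub (right_mem_Icc.2 hab'.le)).2.le
    (.of_forall fun t => by positivity) (ContinuousOn.intervalIntegrable ?_))
  rw [uIcc_of_le hab]
  exact (continuousOn_finsetSum _ fun n _ => continuousOn_const.mul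
    (continuousOn_fourierChar_curvedPhase hcont s n)).norm.pow 2

namespace AssumptionH

variable {α c₁ c₂ c₃ t : ℝ} {p : ℝ → ℝ}

lemma contDiffAt (hp : AssumptionH α c₁ c₂ c₃ p) (ht : 0 < t) : ContDiffAt ℝ 2 p t :=
  hp.2.1.contDiffAt (Ioi_mem_nhds ht)

lemma deriv_ne_zero (hp : AssumptionH α c₁ c₂ c₃ p) (hc₁ : 0 < c₁) (ht : 0 < t) :
    deriv p t ≠ 0 :=
  abs_pos.1 ((by positivity : 0 < c₁ * t ^ (α - 1)).trans_le (hp.2.2.1 t ht.le).1)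

end AssumptionH

/-- **High-frequency curved Ingham inequality** (Corollary `cor:highfreqintro`, first part). -/
theorem highfreq_curved_ingham
    (α s c₁ c₂ c₃ : ℝ) (hs : 2 < s) (hα : 2 ≤ α)
    (hc₁ : 0 < c₁) (hc₁₂ : c₁ < c₂) (hc₃ : 0 < c₃)
    (p : ℝ → ℝ) (hp : AssumptionH α c₁ c₂ c₃ p) :
    ∀ T : ℝ, 0 < T → ∃ N₀ : ℕ, ∃ Ctil : ℝ, 0 < Ctil ∧
      ∀ N : ℕ, N₀ ≤ N →
        ∀ c : ℤ → ℂ, {n : ℤ | c n ≠ 0}.Finite →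
          (∀ n : ℤ, |n| < (N : ℤ) → c n = 0) →
          Ctil * ∑' n : ℤ, ‖c n‖ ^ 2 ≤
            ∫ t in (0:ℝ)..T,
              ‖∑' n : ℤ, c n * Complex.exp (2 * Real.pi * Complex.I *
                ((n : ℂ) * (p t : ℂ) + ((|(n : ℝ)| ^ s : ℝ) : ℂ) * (t : ℂ)))‖ ^ 2 := fun _ hT =>
  highfreq_curved_ingham_general hs ⟨half_pos hT, half_lt_self hT⟩
    (hp.1.continuousOn.mono Icc_subset_Ici_self) (hp.contDiffAt (half_pos hT))
    (hp.deriv_ne_zero hc₁ (half_pos hT))
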